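/- arXiv:2107.04122 — 2 statements merged into one kernel-verified Lean document; each statement's English description precedes it below -/
import Mathlib

section
/- Let P, Q be polynomials in n complex variables with Q(0) ≠ 0, and let F = P/Q. Let A be an n×n integer matrix with determinant 1 whose columns are q^{(1)},…,q^{(n)} ∈ ℤ^n, and fix 1 ≤ p ≤ n. Let ρ ∈ ℝ^n be such that Q has no zeros on the closed polydisc {z ∈ ℂ^n : |z_i| ≤ e^{ρ_i}, i = 1,…,n}. Let t = (t_1,…,t_p) ∈ ℂ^p with 0 < |t_i| < e^{⟨q^{(i)},ρ⟩} for i = 1,…,p. Assume moreover that the function G(w) := F(w^{A^{-1}}), a priori defined for w ∈ (ℂ∖{0})^n, extends to a function that is continuous and, for each fixed w' = (w_{p+1},…,w_n) on the torus {|w_j| = e^{⟨q^{(j)},ρ⟩}, j = p+1,…,n}, holomorphic in (w_1,…,w_p) on the closed polydisc {|w_i| ≤ e^{⟨q^{(i)},ρ⟩}, i = 1,…,p}. Then (1/(2πi)^n) ∫_{Γ_ρ} F(z) · [∏_{i=1}^p z^{q^{(i)}}/(z^{q^{(i)}} − t_i)] · dz_1/z_1 ∧ … ∧ dz_n/z_n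 = (1/(2πi)^{n−p}) ∫_{Γ_{ρ'}} F((t_1,…,t_p,w_{p+1},…,w_n)^{A^{-1}}) · dw_{p+1}/w_{p+1} ∧ … ∧ dw_n/w_n, where ρ' = (⟨q^{(p+1)},ρ⟩,…,⟨q^{(n)},ρ⟩). -/
open Complex

/-- The monomial map `w ↦ w^B` for an integer matrix `B`, with `(w^B)_j = ∏ₖ w_k ^ B k j`
(the `j`-th coordinate is the monomial with exponent vector the `j`-th column of `B`). -/
noncomputable def monoMap {n : ℕ} (B : Matrix (Fin n) (Fin n) ℤ) (w : Fin n → ℂ) : Fin n → ℂ :=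
  fun j => ∏ k, w k ^ B k j

/-- The normalized torus integral `(1/(2πi)ⁿ) ∫_{Γ} g(z) dz₁ ∧ … ∧ dzₙ` over the real torus
with center `0` and radii `R`. -/
noncomputable def normTorusIntegral {n : ℕ} (R : Fin n → ℝ) (g : (Fin n → ℂ) → ℂ) : ℂ :=
  ((2 * (Real.pi : ℂ) * I) ^ n)⁻¹ * torusIntegral g 0 R

/-- Torus in additive form. -/
abbrev AddC : Type := AddCircle (2 * Real.pi)

instance factTwoPiPos : Fact (0 < 2 * Real.pi) := ⟨Real.two_pi_pos⟩

/-- Parametrization of the torus of radii `R` by a product of additive circles. -/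
noncomputable def torusE {n : ℕ} (R : Fin n → ℝ) (x : Fin n → AddC) : Fin n → ℂ :=
  fun i => (R i : ℂ) * (AddCircle.toCircle (x i) : ℂ)

theorem continuous_torusE {n : ℕ} (R : Fin n → ℝ) : Continuous (torusE R) := by
  unfold torusE
  refine continuous_pi fun i => continuous_const.mul ?_
  exact continuous_subtype_val.comp (AddCircle.continuous_toCircle.comp (continuous_apply i))

theorem norm_torusE {n : ℕ} (R : Fin n → ℝ) (hR : ∀ i, 0 < R i) (x : Fin n → AddC) (i : Fin n) :
    ‖torusE R x i‖ = R i := by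
  have h : ‖(AddCircle.toCircle (x i) : ℂ)‖ = 1 := Circle.norm_coe _
  rw [torusE, norm_mul, h, mul_one]
  simp [abs_of_pos (hR i)]

theorem torusE_ne_zero {n : ℕ} (R : Fin n → ℝ) (hR : ∀ i, 0 < R i) (x : Fin n → AddC)
    (i : Fin n) : torusE R x i ≠ 0 := by
  rw [← norm_pos_iff, norm_torusE R hR]; exact hR i

theorem torusE_mk {n : ℕ} (R : Fin n → ℝ) (θ : Fin n → ℝ) :
    torusE R (fun i => (θ i : AddC)) = torusMap 0 R θ := by
  funext i
  simp [torusE, torusMap, AddCircle.toCircle_apply_mk, Circle.coe_exp]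

open MeasureTheory Set in
theorem integral_torus {n : ℕ} (f : (Fin n → AddC) → ℂ) (hf : Continuous f) :
    ∫ θ in Icc (0 : Fin n → ℝ) (fun _ => 2 * Real.pi), f (fun i => (θ i : AddC))
      = ∫ x, f x := by
  have h := measurePreserving_pi (fun _ : Fin n => volume.restrict (Ioc (0:ℝ) (0 + 2 * Real.pi)))
    (fun _ : Fin n => (volume : Measure AddC))
    (fun i => AddCircle.measurePreserving_mk (2 * Real.pi) 0)
  rw [← Measure.restrict_pi_pi] at h
  rw [volume_pi, volume_pi, ← h.map_eq, integral_map h.measurable.aemeasurable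
    hf.aestronglyMeasurable]
  simp only [zero_add]
  rw [← setIntegral_congr_set (Measure.univ_pi_Ioc_ae_eq_Icc (f := (0 : Fin n → ℝ)))]
  rfl

theorem normTorusIntegral_eq {n : ℕ} (R : Fin n → ℝ) (hR : ∀ i, 0 < R i)
    (f : (Fin n → ℂ) → ℂ) (hf : Continuous fun x => f (torusE R x)) :
    normTorusIntegral R (fun z => f z / ∏ j, z j)
      = ((2 * (Real.pi : ℂ)) ^ n)⁻¹ * ∫ x, f (torusE R x) := by
  unfold normTorusIntegral torusIntegral
  rw [← integral_torus _ hf]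
  have : ∀ θ : Fin n → ℝ, (∏ i, (R i : ℂ) * exp (θ i * I) * I) •
      (f (torusMap 0 R θ) / ∏ j, torusMap 0 R θ j) =
      I ^ n * f (torusE R fun i => (θ i : AddC)) := by
    intro θ
    rw [torusE_mk, Finset.prod_mul_distrib]
    have h0 : (∏ i, (R i : ℂ) * exp (θ i * I)) ≠ 0 :=
      Finset.prod_ne_zero_iff.2 fun i _ => mul_ne_zero
        (by exact_mod_cast (hR i).ne') (exp_ne_zero _)
    have h1 : (∏ j, torusMap 0 R θ j) = ∏ i, (R i : ℂ) * exp (θ i * I) := by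
      simp [torusMap]
    rw [h1, smul_eq_mul]
    simp only [Finset.prod_const, Finset.card_univ, Fintype.card_fin]
    generalize (∏ i, (R i : ℂ) * exp (θ i * I)) = a at h0
    field_simp
  simp only [this]
  rw [MeasureTheory.integral_const_mul, mul_pow _ I, mul_inv, mul_assoc,
    inv_mul_cancel_left₀ (pow_ne_zero _ I_ne_zero)]

open MeasureTheory Set in
theorem integral_append {p m : ℕ} (f : (Fin (p + m) → AddC) → ℂ) (hf : Continuous f) :
    ∫ x, f x = ∫ y : Fin m → AddC, ∫ x : Fin p → AddC, f (Fin.append x y) := by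
  let φ : (Fin p → AddC) × (Fin m → AddC) →+ (Fin (p + m) → AddC) :=
    { toFun := fun a => Fin.append a.1 a.2
      map_zero' := by
        funext i
        refine Fin.addCases (fun i => ?_) (fun i => ?_) i <;> simp
      map_add' := by
        intro a b
        funext i
        refine Fin.addCases (fun i => ?_) (fun i => ?_) i <;> simp }
  have hc : Continuous φ := by
    refine continuous_pi fun i => ?_
    refine Fin.addCases (fun i => ?_) (fun i => ?_) i
    · simpa [φ, Function.comp_def] using (continuous_apply i).comp continuous_fst
    · simpa [φ, Function.comp_def] using (continuous_apply i).comp continuous_snd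
  have hs : Function.Surjective φ := by
    intro z
    refine ⟨(fun i => z (Fin.castAdd m i), fun i => z (Fin.natAdd p i)), ?_⟩
    simp [φ, Fin.append_castAdd_natAdd]
  have : ((volume : Measure (Fin p → AddC)).prod
      (volume : Measure (Fin m → AddC))).IsAddHaarMeasure :=
    Measure.prod.instIsAddHaarMeasure _ _
  have h := φ.measurePreserving (μ := (volume : Measure (Fin p → AddC)).prod volume)
    (ν := volume) hc hs (by
      rw [← univ_prod_univ, Measure.prod_prod]
      simp only [volume_pi, Measure.pi_univ]
      simp [pow_add])
  rw [← h.map_eq, integral_map h.measurable.aemeasurable hf.aestronglyMeasurable]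
  rw [integral_prod_symm]
  · rfl
  · exact (hf.comp hc).integrable_of_hasCompactSupport (HasCompactSupport.of_compactSpace _)

/-- The endomorphism of the additive torus given by the transpose of `A`. -/
noncomputable def torusHom {n : ℕ} (A : Matrix (Fin n) (Fin n) ℤ) : (Fin n → AddC) →+ (Fin n → AddC) where
  toFun x k := ∑ j, A j k • x j
  map_zero' := by funext k; simp
  map_add' x y := by funext k; simp [Finset.sum_add_distrib]

theorem torusHom_comp {n : ℕ} (A B : Matrix (Fin n) (Fin n) ℤ) (x : Fin n → AddC) :
    torusHom B (torusHom A x) = torusHom (A * B) x := by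
  funext k
  simp only [torusHom, AddMonoidHom.coe_mk, ZeroHom.coe_mk, Matrix.mul_apply, Finset.smul_sum,
    Finset.sum_smul, smul_smul]
  rw [Finset.sum_comm]
  refine Finset.sum_congr rfl fun j _ => Finset.sum_congr rfl fun i _ => ?_
  exact congrArg (· • x j) (mul_comm (B i k) (A j i))

theorem torusHom_one {n : ℕ} (x : Fin n → AddC) : torusHom 1 x = x := by
  funext k
  simp [torusHom, Matrix.one_apply]

open MeasureTheory Set in
theorem integral_torusHom {n : ℕ} (A : Matrix (Fin n) (Fin n) ℤ) (hA : A.det = 1)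
    (f : (Fin n → AddC) → ℂ) (hf : Continuous f) :
    ∫ x, f (torusHom A x) = ∫ x, f x := by
  have hc : Continuous (torusHom A) := by
    refine continuous_pi fun k => ?_
    change Continuous fun x : Fin n → AddC => ∑ j, A j k • x j
    refine continuous_finsetSum _ fun j _ => ?_
    exact (continuous_zsmul (A j k)).comp (continuous_apply j)
  have hs : Function.Surjective (torusHom A) := fun y => ⟨torusHom A⁻¹ y, by
    rw [torusHom_comp, Matrix.nonsing_inv_mul _ (by simp [hA]), torusHom_one]⟩
  have h := (torusHom A).measurePreserving (μ := volume) (ν := volume) hc hs rfl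
  conv_rhs => rw [← h.map_eq, integral_map h.measurable.aemeasurable hf.aestronglyMeasurable]

theorem monoMap_comp {n : ℕ} (A B : Matrix (Fin n) (Fin n) ℤ) (z : Fin n → ℂ)
    (hz : ∀ i, z i ≠ 0) : monoMap B (monoMap A z) = monoMap (A * B) z := by
  funext k
  simp only [monoMap, Matrix.mul_apply, ← Finset.prod_zpow]
  rw [Finset.prod_comm]
  refine Finset.prod_congr rfl fun j _ => ?_
  have : ∀ s : Finset (Fin n), ∏ i ∈ s, (z j ^ A j i) ^ B i k
      = z j ^ ∑ i ∈ s, A j i * B i k := by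
    intro s
    induction s using Finset.induction_on with
    | empty => simp
    | insert a s ha ih => rw [Finset.prod_insert ha, Finset.sum_insert ha, zpow_add₀ (hz j), ih,
        zpow_mul]
  exact this _

theorem monoMap_one {n : ℕ} (z : Fin n → ℂ) : monoMap 1 z = z := by
  funext k
  simp only [monoMap, Matrix.one_apply]
  rw [Finset.prod_eq_single k] <;> simp +contextual

theorem toCircle_sum {ι : Type*} (s : Finset ι) (f : ι → AddC) :
    AddCircle.toCircle (∑ i ∈ s, f i) = ∏ i ∈ s, AddCircle.toCircle (f i) := by
  classical
  induction s using Finset.induction_on with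
  | empty => simp
  | insert a s ha ih => rw [Finset.sum_insert ha, Finset.prod_insert ha, AddCircle.toCircle_add, ih]

theorem monoMap_torusE {n : ℕ} (A : Matrix (Fin n) (Fin n) ℤ) (ρ : Fin n → ℝ)
    (x : Fin n → AddC) :
    monoMap A (torusE (fun i => Real.exp (ρ i)) x)
      = torusE (fun k => Real.exp (∑ j, (A j k : ℝ) * ρ j)) (torusHom A x) := by
  funext k
  simp only [monoMap, torusE, torusHom, AddMonoidHom.coe_mk, ZeroHom.coe_mk, mul_zpow,
    Finset.prod_mul_distrib, toCircle_sum, AddCircle.toCircle_zsmul]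
  congr 1
  · rw [Real.exp_sum]
    push_cast
    refine Finset.prod_congr rfl fun j _ => ?_
    rw [← Complex.exp_int_mul]
  · exact (map_prod Circle.coeHom (fun j => AddCircle.toCircle (x j) ^ A j k) Finset.univ).symm

theorem cauchy_torus : ∀ (p : ℕ) (R : Fin p → ℝ) (t : Fin p → ℂ) (_ : ∀ i, ‖t i‖ < R i)
    (g : (Fin p → ℂ) → ℂ) (_ : DifferentiableOn ℂ g {w | ∀ i, ‖w i‖ ≤ R i}),
    torusIntegral (fun w => (∏ i, (w i - t i)⁻¹) * g w) 0 R
      = (2 * (Real.pi : ℂ) * I) ^ p * g t := by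
  intro p
  induction p with
  | zero =>
    intro R t ht g hg
    rw [torusIntegral_dim0]
    simp [Subsingleton.elim t 0]
  | succ p ih =>
    intro R t ht g hg
    have hR : ∀ i, 0 < R i := fun i => (norm_nonneg _).trans_lt (ht i)
    have hnorm : ∀ θ i, ‖torusMap 0 R θ i‖ = R i := by
      intro θ i
      simp [torusMap, abs_of_pos (hR i)]
    have hcm : Continuous (torusMap 0 R) := by unfold torusMap; fun_prop
    have hint : TorusIntegrable (fun w => (∏ i, (w i - t i)⁻¹) * g w) 0 R := by
      refine Continuous.integrableOn_Icc ?_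
      refine Continuous.mul ?_ ?_
      · refine continuous_finsetProd _ fun i _ => Continuous.inv₀ ?_ ?_
        · exact ((continuous_apply i).comp hcm).sub continuous_const
        · intro θ h
          have := hnorm θ i
          rw [sub_eq_zero.1 h] at this
          exact (ht i).ne this
      · exact hg.continuousOn.comp_continuous hcm fun θ i => (hnorm θ i).le
    rw [torusIntegral_succ hint]
    have hcons : ∀ x : ℂ, Differentiable ℂ (fun y : Fin p → ℂ => (Fin.cons x y : Fin (p+1) → ℂ)) := by
      intro x
      rw [differentiable_pi]
      intro i
      refine Fin.cases ?_ (fun i => ?_) i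
      · simp
      · simp only [Fin.cons_succ]; fun_prop
    have hcons' : Differentiable ℂ (fun x : ℂ => (Fin.cons x (Fin.tail t) : Fin (p+1) → ℂ)) := by
      rw [differentiable_pi]
      intro i
      refine Fin.cases ?_ (fun i => ?_) i
      · simp
      · simp
    have hinner : ∀ x ∈ Metric.sphere (0:ℂ) (R 0),
        torusIntegral (fun y : Fin p → ℂ => (∏ i, ((Fin.cons x y : Fin (p+1) → ℂ) i - t i)⁻¹)
          * g (Fin.cons x y)) ((0 : Fin (p+1) → ℂ) ∘ Fin.succ) (R ∘ Fin.succ)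
        = (x - t 0)⁻¹ • ((2 * (Real.pi : ℂ) * I) ^ p * g (Fin.cons x (Fin.tail t))) := by
      intro x hx
      have h1 := ih (R ∘ Fin.succ) (Fin.tail t) (fun i => ht i.succ) (fun y => g (Fin.cons x y))
        (hg.comp (hcons x).differentiableOn (by
          intro y hy i
          refine Fin.cases ?_ (fun i => ?_) i
          · simpa using (mem_sphere_zero_iff_norm.1 hx).le
          · simpa using hy i))
      simp only [Fin.prod_univ_succ, Fin.cons_zero, Fin.cons_succ, mul_assoc]
      rw [torusIntegral_const_mul, smul_eq_mul]
      congr 1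
      simpa [mul_assoc, Fin.tail] using h1
    have h0 : (0 : Fin (p+1) → ℂ) 0 = 0 := rfl
    rw [h0, circleIntegral.integral_congr (hR 0).le hinner]
    have hd : DifferentiableOn ℂ (fun x => (2 * (Real.pi : ℂ) * I) ^ p * g (Fin.cons x (Fin.tail t)))
        (Metric.closedBall 0 (R 0)) := by
      refine DifferentiableOn.const_mul ?_ _
      refine hg.comp hcons'.differentiableOn ?_
      intro x hx i
      refine Fin.cases ?_ (fun i => ?_) i
      · simpa using hx
      · simpa [Fin.tail] using (ht i.succ).le
    rw [circleIntegral_sub_inv_smul_of_differentiable_on_off_countable Set.countable_empty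
      (by simpa using ht 0) hd.continuousOn (fun x hx => (hd x
        (Metric.ball_subset_closedBall hx.1)).differentiableAt
        (Metric.closedBall_mem_nhds_of_mem hx.1))]
    rw [Fin.cons_self_tail, smul_eq_mul]
    ring

theorem cauchy_addTorus (p : ℕ) (R : Fin p → ℝ) (t : Fin p → ℂ) (ht : ∀ i, ‖t i‖ < R i)
    (g : (Fin p → ℂ) → ℂ) (hg : DifferentiableOn ℂ g {w | ∀ i, ‖w i‖ ≤ R i}) :
    ∫ x, g (torusE R x) * ∏ i, torusE R x i / (torusE R x i - t i)
      = (2 * (Real.pi : ℂ)) ^ p * g t := by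
  have hR : ∀ i, 0 < R i := fun i => (norm_nonneg _).trans_lt (ht i)
  have hc : Continuous fun x => g (torusE R x) * ∏ i, torusE R x i / (torusE R x i - t i) := by
    refine Continuous.mul ?_ ?_
    · exact hg.continuousOn.comp_continuous (continuous_torusE R) fun x i =>
        (norm_torusE R hR x i).le
    · refine continuous_finsetProd _ fun i _ => Continuous.div ?_ ?_ ?_
      · exact (continuous_apply i).comp (continuous_torusE R)
      · exact ((continuous_apply i).comp (continuous_torusE R)).sub continuous_const
      · intro x h
        have := norm_torusE R hR x i
        rw [sub_eq_zero.1 h] at this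
        exact (ht i).ne this
  have h := normTorusIntegral_eq R hR (fun w => g w * ∏ i, w i / (w i - t i)) hc
  have h2 : normTorusIntegral R (fun z => (g z * ∏ i, z i / (z i - t i)) / ∏ j, z j) = g t := by
    have h3 := cauchy_torus p R t ht g hg
    unfold normTorusIntegral
    have h4 : torusIntegral (fun z => (g z * ∏ i, z i / (z i - t i)) / ∏ j, z j) 0 R
        = torusIntegral (fun w => (∏ i, (w i - t i)⁻¹) * g w) 0 R := by
      unfold torusIntegral
      congr 1
      funext θ
      have h0 : (∏ j, torusMap 0 R θ j) ≠ 0 := by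
        rw [← torusE_mk]
        exact Finset.prod_ne_zero_iff.2 fun i _ => torusE_ne_zero R hR _ i
      congr 1
      simp only [div_eq_mul_inv, Finset.prod_mul_distrib]
      field_simp
    rw [h4, h3, inv_mul_cancel_left₀]
    exact pow_ne_zero _ (by simp [Real.pi_ne_zero])
  rw [h2] at h
  rw [h, mul_inv_cancel_left₀]
  exact pow_ne_zero _ (by simp [Real.pi_ne_zero])

/-- Theorem 1 of the paper: lowering the multiplicity of integration in the
integral representation of the `p`-dimensional diagonal.  Here `n = p + m`, `F = P/Q` with
`Q(0) ≠ 0`, `A` is a unimodular integer matrix with columns `q⁽¹⁾,…,q⁽ⁿ⁾`, `Q` has no zeros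
on the closed polydisc of radii `e^{ρᵢ}`, and `0 < |tᵢ| < e^{⟨q⁽ⁱ⁾,ρ⟩}` for `i ≤ p`.
Assuming `G(w) = F(w^{A⁻¹})` extends continuously, holomorphically in the first `p`
variables, to (closed polydisc)×(torus), one has
`(1/(2πi)ⁿ) ∫_{Γ_ρ} F(z) ∏ᵢ₌₁ᵖ [z^{q⁽ⁱ⁾}/(z^{q⁽ⁱ⁾}−tᵢ)] dz₁/z₁ ∧ … ∧ dzₙ/zₙ
 = (1/(2πi)^{n−p}) ∫_{Γ_{ρ'}} F((t,w')^{A⁻¹}) dw_{p+1}/w_{p+1} ∧ … ∧ dwₙ/wₙ`,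
where `ρ' = (⟨q⁽ᵖ⁺¹⁾,ρ⟩,…,⟨q⁽ⁿ⁾,ρ⟩)`. -/
theorem diagonal_lower_multiplicity (p m : ℕ) (hp : 1 ≤ p)
    (P Q : MvPolynomial (Fin (p + m)) ℂ) (hQ0 : MvPolynomial.eval (0 : Fin (p + m) → ℂ) Q ≠ 0)
    (F : (Fin (p + m) → ℂ) → ℂ)
    (hF : ∀ z, F z = MvPolynomial.eval z P / MvPolynomial.eval z Q)
    (A : Matrix (Fin (p + m)) (Fin (p + m)) ℤ) (hA : A.det = 1)
    (ρ : Fin (p + m) → ℝ)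
    (hQ : ∀ z : Fin (p + m) → ℂ, (∀ i, ‖z i‖ ≤ Real.exp (ρ i)) →
      MvPolynomial.eval z Q ≠ 0)
    (t : Fin p → ℂ)
    (ht0 : ∀ i, t i ≠ 0)
    (ht : ∀ i : Fin p, ‖t i‖ < Real.exp (∑ j, (A j (Fin.castAdd m i) : ℝ) * ρ j))
    (hG : ∃ G : (Fin (p + m) → ℂ) → ℂ,
      (∀ w : Fin (p + m) → ℂ, (∀ k, w k ≠ 0) → G w = F (monoMap A⁻¹ w)) ∧
      ContinuousOn G {w : Fin (p + m) → ℂ |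
        (∀ i : Fin p, ‖w (Fin.castAdd m i)‖
          ≤ Real.exp (∑ j, (A j (Fin.castAdd m i) : ℝ) * ρ j)) ∧
        (∀ j' : Fin m, ‖w (Fin.natAdd p j')‖
          = Real.exp (∑ j, (A j (Fin.natAdd p j') : ℝ) * ρ j))} ∧
      (∀ w' : Fin m → ℂ,
        (∀ j' : Fin m, ‖w' j'‖ = Real.exp (∑ j, (A j (Fin.natAdd p j') : ℝ) * ρ j)) →
        DifferentiableOn ℂ (fun w₁ : Fin p → ℂ => G (Fin.append w₁ w'))
          {w₁ : Fin p → ℂ | ∀ i, ‖w₁ i‖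
            ≤ Real.exp (∑ j, (A j (Fin.castAdd m i) : ℝ) * ρ j)})) :
    normTorusIntegral (fun i => Real.exp (ρ i))
      (fun z => F z *
        (∏ i : Fin p, (∏ j, z j ^ A j (Fin.castAdd m i))
          / ((∏ j, z j ^ A j (Fin.castAdd m i)) - t i)) / ∏ j, z j)
    = normTorusIntegral
        (fun j' : Fin m => Real.exp (∑ j, (A j (Fin.natAdd p j') : ℝ) * ρ j))
        (fun w' => F (monoMap A⁻¹ (Fin.append t w')) / ∏ j', w' j') := by
  obtain ⟨G, hGF, hGc, hGd⟩ := hG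
  set Rz : Fin (p + m) → ℝ := fun i => Real.exp (ρ i) with hRz
  set Rw : Fin (p + m) → ℝ := fun k => Real.exp (∑ j, (A j k : ℝ) * ρ j) with hRw
  have hRzp : ∀ i, 0 < Rz i := fun i => Real.exp_pos _
  have hRwp : ∀ i, 0 < Rw i := fun i => Real.exp_pos _
  let K : (Fin (p + m) → AddC) → ℂ := fun x => G (torusE Rw x) *
    ∏ i : Fin p, torusE Rw x (Fin.castAdd m i) / (torusE Rw x (Fin.castAdd m i) - t i)
  have hKc : Continuous K := by
    refine Continuous.mul ?_ ?_
    · exact hGc.comp_continuous (continuous_torusE Rw) fun x =>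
        ⟨fun i => (norm_torusE Rw hRwp x _).le, fun i => norm_torusE Rw hRwp x _⟩
    · refine continuous_finsetProd _ fun i _ => Continuous.div ?_ ?_ ?_
      · exact (continuous_apply _).comp (continuous_torusE Rw)
      · exact ((continuous_apply _).comp (continuous_torusE Rw)).sub continuous_const
      · intro x h
        have := norm_torusE Rw hRwp x (Fin.castAdd m i)
        rw [sub_eq_zero.1 h] at this
        exact (ht i).ne this
  have hcomp : ∀ x, F (torusE Rz x) *
        (∏ i : Fin p, (∏ j, torusE Rz x j ^ A j (Fin.castAdd m i))
          / ((∏ j, torusE Rz x j ^ A j (Fin.castAdd m i)) - t i)) = K (torusHom A x) := by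
    intro x
    have h1 := monoMap_torusE A ρ x
    have h2 : ∀ k, ∏ j, torusE Rz x j ^ A j k = torusE Rw (torusHom A x) k :=
      fun k => congrFun h1 k
    have h3 : G (torusE Rw (torusHom A x)) = F (torusE Rz x) := by
      rw [hGF _ (torusE_ne_zero Rw hRwp _)]
      rw [hRw, ← h1, monoMap_comp _ _ _ (torusE_ne_zero Rz hRzp x),
        Matrix.mul_nonsing_inv _ (by simp [hA]), monoMap_one]
    simp only [K, h2, h3]
  have hhc : Continuous (torusHom A) := by
    refine continuous_pi fun k => ?_
    change Continuous fun x : Fin (p + m) → AddC => ∑ j, A j k • x j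
    refine continuous_finsetSum _ fun j _ => ?_
    exact (continuous_zsmul (A j k)).comp (continuous_apply j)
  rw [normTorusIntegral_eq Rz hRzp (fun z => F z *
        (∏ i : Fin p, (∏ j, z j ^ A j (Fin.castAdd m i))
          / ((∏ j, z j ^ A j (Fin.castAdd m i)) - t i)))
      (by simp only [hcomp]; exact hKc.comp hhc)]
  simp only [hcomp]
  rw [integral_torusHom A hA K hKc, integral_append K hKc]
  have happ : ∀ (x : Fin p → AddC) (y : Fin m → AddC), torusE Rw (Fin.append x y) =
      Fin.append (torusE (fun i => Rw (Fin.castAdd m i)) x)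
        (torusE (fun i => Rw (Fin.natAdd p i)) y) := by
    intro x y
    funext i
    refine Fin.addCases (fun i => ?_) (fun i => ?_) i <;> simp [torusE]
  have hinner : ∀ y : Fin m → AddC, ∫ x : Fin p → AddC, K (Fin.append x y)
      = (2 * (Real.pi : ℂ)) ^ p *
        F (monoMap A⁻¹ (Fin.append t (torusE (fun i => Rw (Fin.natAdd p i)) y))) := by
    intro y
    simp only [K, happ, Fin.append_left]
    rw [cauchy_addTorus p (fun i => Rw (Fin.castAdd m i)) t ht
      (fun w => G (Fin.append w (torusE (fun i => Rw (Fin.natAdd p i)) y)))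
      (hGd _ fun j => norm_torusE _ (fun i => hRwp _) y j)]
    rw [hGF]
    intro k
    refine Fin.addCases (fun i => ?_) (fun i => ?_) k
    · simpa using ht0 i
    · simpa using torusE_ne_zero _ (fun i => hRwp _) y i
  have hGc2 : Continuous fun y : Fin m → AddC =>
      F (monoMap A⁻¹ (Fin.append t (torusE (fun i => Rw (Fin.natAdd p i)) y))) := by
    have h1 : ∀ y : Fin m → AddC,
        F (monoMap A⁻¹ (Fin.append t (torusE (fun i => Rw (Fin.natAdd p i)) y)))
        = G (Fin.append t (torusE (fun i => Rw (Fin.natAdd p i)) y)) := by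
      intro y
      rw [hGF]
      intro k
      refine Fin.addCases (fun i => ?_) (fun i => ?_) k
      · simpa using ht0 i
      · simpa using torusE_ne_zero _ (fun i => hRwp _) y i
    simp only [h1]
    refine hGc.comp_continuous ?_ ?_
    · refine continuous_pi fun k => ?_
      refine Fin.addCases (fun i => ?_) (fun i => ?_) k
      · simpa using continuous_const
      · simpa [Function.comp_def] using (continuous_apply i).comp
          (continuous_torusE (fun i => Rw (Fin.natAdd p i)))
    · intro y
      refine ⟨fun i => ?_, fun i => ?_⟩
      · simpa using (ht i).le
      · simpa using norm_torusE _ (fun i => hRwp (Fin.natAdd p i)) y i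
  rw [normTorusIntegral_eq (fun j' : Fin m => Rw (Fin.natAdd p j')) (fun i => hRwp _)
    (fun w' => F (monoMap A⁻¹ (Fin.append t w'))) hGc2]
  simp only [hinner]
  rw [MeasureTheory.integral_const_mul, pow_add, mul_inv_rev, mul_assoc, inv_mul_cancel_left₀]
  exact pow_ne_zero _ (by simp [Real.pi_ne_zero])
end

section
/- Let F be holomorphic on an open neighborhood of the closed polydisc {z ∈ ℂ^n : |z_i| ≤ e^{ρ_i}, i = 1,…,n}, with Taylor expansion F(z) = ∑_{α ∈ ℕ^n} c_α z^α at 0. Let q^{(1)},…,q^{(p)} ∈ ℕ^n and let t = (t_1,…,t_p) ∈ ℂ^p satisfy |t_i| < e^{⟨q^{(i)},ρ⟩} for i = 1,…,p. Then the diagonal series d_q(t) = ∑_{l ∈ ℕ^p} c_{l_1 q^{(1)} + … + l_p q^{(p)}} t_1^{l_1} ⋯ t_p^{l_p} converges absolutely and equals the torus integral (1/(2πi)^n) ∫_{Γ_ρ} F(z) · [∏_{i=1}^p z^{q^{(i)}}/(z^{q^{(i)}} − t_i)] · dz_1/z_1 ∧ … ∧ dz_n/z_n. -/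
open Complex

open MeasureTheory Filter Topology Metric

lemma hasSum_pi_prod_aux {𝕜 : Type*} [RCLike 𝕜] : ∀ (p : ℕ) (f : Fin p → ℕ → 𝕜) (s : Fin p → 𝕜),
    (∀ i, HasSum (f i) (s i)) → HasSum (fun l : Fin p → ℕ => ∏ i, f i (l i)) (∏ i, s i) := by
  intro p
  induction p with
  | zero =>
    intro f s _
    simp only [Fin.prod_univ_zero]
    exact hasSum_unique (fun _ : Fin 0 → ℕ => (1 : 𝕜))
  | succ p ih =>
    intro f s h
    have h1 := ih (fun i => f i.succ) (fun i => s i.succ) (fun i => h i.succ)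
    have h0 := h 0
    have hn0 := summable_norm_iff.2 h0.summable
    have hn1 := summable_norm_iff.2 h1.summable
    have hs := summable_mul_of_summable_norm hn0 hn1
    have h2 := h0.mul h1 hs
    rw [Fin.prod_univ_succ, ← (Fin.consEquiv (fun _ : Fin (p+1) => ℕ)).hasSum_iff]
    have e : (fun l : Fin (p+1) → ℕ => ∏ i, f i (l i)) ∘ (Fin.consEquiv (fun _ : Fin (p+1) => ℕ)) =
        fun x : ℕ × (Fin p → ℕ) => f 0 x.1 * ∏ i, f i.succ (x.2 i) := by
      funext x
      simp [Fin.prod_univ_succ, Fin.consEquiv]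
    rw [e]
    exact h2

lemma holo_aux {α : Type*} [MeasurableSpace α] (μ : Measure α) [IsFiniteMeasure μ]
    (f : ℂ → α → ℂ) (M : ℝ)
    (hm : ∀ w ∈ ball (0 : ℂ) 1, AEStronglyMeasurable (f w) μ)
    (hd : ∀ a, DifferentiableOn ℂ (fun w => f w a) (ball 0 1))
    (hM : ∀ w ∈ ball (0 : ℂ) 1, ∀ a, ‖f w a‖ ≤ M) :
    DifferentiableOn ℂ (fun w => ∫ a, f w a ∂μ) (ball 0 1) := by
  intro x₀ hx₀
  have hx₀' : ‖x₀‖ < 1 := by simpa using hx₀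
  set r := (1 - ‖x₀‖) / 2 with hr
  have hr0 : 0 < r := by rw [hr]; linarith
  have hsub : ∀ x ∈ ball x₀ r, closedBall x r ⊆ ball (0 : ℂ) 1 := by
    intro x hx y hy
    have h1 : dist x x₀ < r := hx
    have h2 : dist y x ≤ r := hy
    have h3 := dist_triangle4 y x x₀ 0
    rw [dist_zero_right x₀] at h3
    show dist y 0 < 1
    have : 1 = r + r + ‖x₀‖ := by rw [hr]; ring
    linarith
  have hdiff : ∀ a, ∀ x ∈ ball (0 : ℂ) 1, HasDerivAt (fun w => f w a) (deriv (fun w => f w a) x) x :=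
    fun a x hx => ((hd a).differentiableAt (isOpen_ball.mem_nhds hx)).hasDerivAt
  have key := hasDerivAt_integral_of_dominated_loc_of_deriv_le (μ := μ) (F := f) (x₀ := x₀)
    (s := ball x₀ r) (bound := fun _ => M / r) (F' := fun x a => deriv (fun w => f w a) x)
    (ball_mem_nhds _ hr0) ?_ ?_ ?_ ?_ ?_ ?_
  · exact key.2.differentiableAt.differentiableWithinAt
  · filter_upwards [isOpen_ball.mem_nhds hx₀] with x hx using hm x hx
  · exact Integrable.of_bound (hm x₀ hx₀) M (ae_of_all _ fun a => hM x₀ hx₀ a)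
  · let h : ℕ → ℂ := fun n => ((r / ((n : ℝ) + 1) : ℝ) : ℂ)
    have hpos : ∀ n : ℕ, 0 < r / ((n : ℝ) + 1) := fun n => by positivity
    have hmem : ∀ n, x₀ + h n ∈ ball (0 : ℂ) 1 := by
      intro n
      apply hsub x₀ (mem_ball_self hr0)
      simp only [mem_closedBall, dist_self_add_left, h, Complex.norm_real, Real.norm_eq_abs,
        abs_of_pos (hpos n)]
      exact div_le_self hr0.le (by linarith [n.cast_nonneg (α := ℝ)])
    have hlim : Tendsto h atTop (𝓝[≠] 0) := by
      rw [tendsto_nhdsWithin_iff]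
      constructor
      · have : Tendsto (fun n : ℕ => r / ((n : ℝ) + 1)) atTop (𝓝 0) :=
          by
            have := (tendsto_one_div_add_atTop_nhds_zero_nat (𝕜 := ℝ)).const_mul r
            simpa [div_eq_mul_inv] using this
        exact (Complex.continuous_ofReal.tendsto' 0 0 (by simp)).comp this
      · exact Eventually.of_forall fun n => by
          exact Complex.ofReal_ne_zero.2 (hpos n).ne'
    refine aestronglyMeasurable_of_tendsto_ae atTop
      (f := fun n a => (h n)⁻¹ • (f (x₀ + h n) a - f x₀ a)) ?_ ?_
    · intro n
      exact ((hm _ (hmem n)).sub (hm _ hx₀)).const_smul (h n)⁻¹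
    · exact ae_of_all _ fun a => ((hdiff a x₀ hx₀).tendsto_slope_zero).comp hlim
  · refine ae_of_all _ fun a x hx => ?_
    refine Complex.norm_deriv_le_of_forall_mem_sphere_norm_le hr0 ?_ ?_
    · exact ((hd a).mono (hsub x hx)).diffContOnCl_ball subset_rfl
    · intro z hz
      exact hM z (hsub x hx (sphere_subset_closedBall hz)) a
  · exact integrable_const _
  · exact ae_of_all _ fun a x hx => hdiff a x (hsub x hx (mem_closedBall_self hr0.le))

/-- The parameter cube. -/
noncomputable abbrev cubeMeas (n : ℕ) : Measure (Fin n → ℝ) :=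
  volume.restrict (Set.Icc (0 : Fin n → ℝ) fun _ => 2 * Real.pi)

instance cubeMeas_finite (n : ℕ) : IsFiniteMeasure (cubeMeas n) :=
  ⟨by simpa [cubeMeas] using (measure_Icc_lt_top)⟩

lemma norm_torusMap_aux {n : ℕ} (R : Fin n → ℝ) (hR : ∀ i, 0 < R i) (θ : Fin n → ℝ) (j : Fin n) :
    ‖torusMap 0 R θ j‖ = R j := by
  simp [torusMap, Complex.norm_exp_ofReal_mul_I, abs_of_pos (hR j)]

lemma torusMap_ne_zero_aux {n : ℕ} (R : Fin n → ℝ) (hR : ∀ i, 0 < R i) (θ : Fin n → ℝ) (j : Fin n) :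
    torusMap 0 R θ j ≠ 0 := by
  rw [← norm_pos_iff, norm_torusMap_aux R hR]; exact hR j

lemma continuous_torusMap_aux {n : ℕ} (R : Fin n → ℝ) :
    Continuous (torusMap 0 R) := by
  unfold torusMap; fun_prop

lemma normTorusIntegral_aux {n : ℕ} (R : Fin n → ℝ) (hR : ∀ i, 0 < R i) (g : (Fin n → ℂ) → ℂ) :
    normTorusIntegral R (fun z => g z / ∏ j, z j) =
      ((2 * (Real.pi : ℂ)) ^ n)⁻¹ * ∫ θ, g (torusMap 0 R θ) ∂(cubeMeas n) := by
  unfold normTorusIntegral torusIntegral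
  have : ∀ θ : Fin n → ℝ, (∏ i, (R i : ℂ) * exp (θ i * I) * I) •
      (g (torusMap 0 R θ) / ∏ j, torusMap 0 R θ j) = I ^ n * g (torusMap 0 R θ) := by
    intro θ
    have h1 : ∏ i, (R i : ℂ) * exp (θ i * I) * I = (∏ j, torusMap 0 R θ j) * I ^ n := by
      rw [Finset.prod_mul_distrib]; simp [torusMap]
    have h2 : ∏ j, torusMap 0 R θ j ≠ 0 :=
      Finset.prod_ne_zero_iff.2 fun j _ => torusMap_ne_zero_aux R hR θ j
    rw [h1, smul_eq_mul]
    field_simp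
  simp_rw [this]
  rw [integral_const_mul, mul_pow, mul_inv, mul_assoc, inv_mul_cancel_left₀ (pow_ne_zero _ I_ne_zero)]

lemma integral_exp_int_aux (a : ℤ) :
    ∫ x in Set.Icc (0 : ℝ) (2 * Real.pi), exp (I * (a * x)) = if a = 0 then 2 * (Real.pi : ℂ) else 0 := by
  rw [integral_Icc_eq_integral_Ioc, ← intervalIntegral.integral_of_le (by positivity)]
  split_ifs with h
  · simp [h]
  · have hc : I * (a : ℂ) ≠ 0 := mul_ne_zero I_ne_zero (by exact_mod_cast h)
    have := integral_exp_mul_complex (a := 0) (b := 2 * Real.pi) hc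
    simp_rw [mul_assoc] at this
    rw [this]
    have e : exp (I * (a * ((2 * Real.pi : ℝ) : ℂ))) = 1 := by
      rw [Complex.exp_eq_one_iff]; exact ⟨a, by push_cast; ring⟩
    rw [e]; simp

lemma integral_cube_aux {n : ℕ} (a : Fin n → ℤ) :
    ∫ θ, ∏ j, exp (I * (a j * (θ j : ℂ))) ∂(cubeMeas n) =
      if a = 0 then (2 * (Real.pi : ℂ)) ^ n else 0 := by
  have h : cubeMeas n = Measure.pi fun _ : Fin n => (volume : Measure ℝ).restrict (Set.Icc 0 (2 * Real.pi)) := by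
    rw [cubeMeas, ← Measure.restrict_pi_pi, Set.pi_univ_Icc]; rfl
  rw [h, integral_fintype_prod_eq_prod (f := fun j (x : ℝ) => exp (I * (a j * (x : ℂ))))]
  simp_rw [integral_exp_int_aux]
  split_ifs with h0
  · simp [h0]
  · obtain ⟨j, hj⟩ := Function.ne_iff.1 h0
    exact Finset.prod_eq_zero (Finset.mem_univ j) (if_neg hj)

lemma integral_monomial_aux {n : ℕ} (R : Fin n → ℝ) (hR : ∀ i, 0 < R i) (α β : Fin n → ℕ) :
    ∫ θ, (∏ j, torusMap 0 R θ j ^ β j) * (∏ j, torusMap 0 R θ j ^ α j)⁻¹ ∂(cubeMeas n) =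
      if β = α then (2 * (Real.pi : ℂ)) ^ n else 0 := by
  have h : ∀ θ : Fin n → ℝ, (∏ j, torusMap 0 R θ j ^ β j) * (∏ j, torusMap 0 R θ j ^ α j)⁻¹ =
      (∏ j, (R j : ℂ) ^ ((β j : ℤ) - α j)) * ∏ j, exp (I * (((β j : ℤ) - α j : ℤ) * (θ j : ℂ))) := by
    intro θ
    rw [← Finset.prod_inv_distrib, ← Finset.prod_mul_distrib, ← Finset.prod_mul_distrib]
    refine Finset.prod_congr rfl fun j _ => ?_
    have e : exp (I * (((β j : ℤ) - α j : ℤ) * (θ j : ℂ))) = exp (θ j * I) ^ ((β j : ℤ) - α j) := by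
      rw [← Complex.exp_int_mul]; congr 1; push_cast; ring
    rw [e, ← mul_zpow]
    have hne := torusMap_ne_zero_aux R hR θ j
    have e2 : (R j : ℂ) * exp (θ j * I) = torusMap 0 R θ j := by simp [torusMap]
    rw [e2, zpow_sub₀ hne, zpow_natCast, zpow_natCast, div_eq_mul_inv]
  simp_rw [h]
  rw [integral_const_mul, integral_cube_aux (fun j => (β j : ℤ) - α j)]
  by_cases hb : β = α
  · subst hb
    simp [show (fun j : Fin n => (0 : ℤ)) = 0 from rfl]
  · rw [if_neg hb, if_neg, mul_zero]
    intro h0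
    apply hb
    funext j
    have := congrFun h0 j
    simp only [Pi.zero_apply] at this
    omega

lemma coeff_aux {n : ℕ} (R : Fin n → ℝ) (hR : ∀ i, 0 < R i) (F : (Fin n → ℂ) → ℂ)
    (U : Set (Fin n → ℂ)) (hU : IsOpen U) (hKU : {z : Fin n → ℂ | ∀ i, ‖z i‖ ≤ R i} ⊆ U)
    (hF : DifferentiableOn ℂ F U) (M : ℝ) (hM : ∀ z : Fin n → ℂ, (∀ i, ‖z i‖ ≤ R i) → ‖F z‖ ≤ M)
    (c : (Fin n → ℕ) → ℂ) (ε : ℝ) (hε : 0 < ε)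
    (hc : ∀ z : Fin n → ℂ, (∀ i, ‖z i‖ < ε) →
      HasSum (fun α : Fin n → ℕ => c α * ∏ i, z i ^ α i) (F z)) (α : Fin n → ℕ) :
    ∫ θ, F (torusMap 0 R θ) * (∏ j, torusMap 0 R θ j ^ α j)⁻¹ ∂(cubeMeas n) =
      (2 * (Real.pi : ℂ)) ^ n * c α := by
  set B : ℝ := (∏ j, R j ^ α j)⁻¹ with hB
  have hB0 : 0 ≤ B := inv_nonneg.2 (Finset.prod_nonneg fun j _ => pow_nonneg (hR j).le _)
  have hBn : ∀ θ, ‖(∏ j, torusMap 0 R θ j ^ α j)⁻¹‖ = B := by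
    intro θ
    simp only [norm_inv, norm_prod, norm_pow, norm_torusMap_aux R hR, hB]
  have hTc := continuous_torusMap_aux R
  have hBc : Continuous fun θ => (∏ j, torusMap 0 R θ j ^ α j)⁻¹ := by
    refine Continuous.inv₀ (by fun_prop) fun θ => ?_
    exact Finset.prod_ne_zero_iff.2 fun j _ => pow_ne_zero _ (torusMap_ne_zero_aux R hR θ j)
  have hmem : ∀ w ∈ closedBall (0 : ℂ) 1, ∀ θ i, ‖(w • torusMap 0 R θ) i‖ ≤ R i := by
    intro w hw θ i
    have hw' : ‖w‖ ≤ 1 := by simpa using hw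
    simp only [Pi.smul_apply, smul_eq_mul, norm_mul, norm_torusMap_aux R hR]
    exact mul_le_of_le_one_left (hR i).le hw'
  set f : ℂ → (Fin n → ℝ) → ℂ := fun w θ =>
    F (w • torusMap 0 R θ) * (∏ j, torusMap 0 R θ j ^ α j)⁻¹ with hf
  have hfM : ∀ w ∈ closedBall (0 : ℂ) 1, ∀ θ, ‖f w θ‖ ≤ M * B := by
    intro w hw θ
    rw [hf]
    simp only [norm_mul, hBn]
    exact mul_le_mul_of_nonneg_right (hM _ (hmem w hw θ)) hB0
  have hfm : ∀ w ∈ closedBall (0 : ℂ) 1, Continuous (f w) := by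
    intro w hw
    refine Continuous.mul ?_ hBc
    exact hF.continuousOn.comp_continuous (by fun_prop) fun θ => hKU (hmem w hw θ)
  have hfc : ∀ θ, ContinuousOn (fun w => f w θ) (closedBall 0 1) := by
    intro θ
    refine ContinuousOn.mul ?_ continuousOn_const
    exact hF.continuousOn.comp (by fun_prop) fun w hw => hKU (hmem w hw θ)
  have hfd : ∀ θ, DifferentiableOn ℂ (fun w => f w θ) (ball 0 1) := by
    intro θ
    refine DifferentiableOn.mul ?_ (differentiableOn_const _)
    exact hF.comp (by fun_prop) fun w hw => hKU (hmem w (ball_subset_closedBall hw) θ)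
  set G : ℂ → ℂ := fun w => ∫ θ, f w θ ∂(cubeMeas n) with hG
  have hGd : DifferentiableOn ℂ G (ball 0 1) :=
    holo_aux (cubeMeas n) f (M * B)
      (fun w hw => (hfm w (ball_subset_closedBall hw)).aestronglyMeasurable) hfd
      (fun w hw => hfM w (ball_subset_closedBall hw))
  have hGc : ContinuousOn G (closedBall 0 1) :=
    continuousOn_of_dominated (bound := fun _ => M * B)
      (fun w hw => (hfm w hw).aestronglyMeasurable)
      (fun w hw => ae_of_all _ (hfM w hw)) (integrable_const _) (ae_of_all _ hfc)
  set H : ℂ → ℂ := fun w => w ^ (∑ j, α j) * ((2 * (Real.pi : ℂ)) ^ n * c α) with hH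
  have hHd : Differentiable ℂ H := by rw [hH]; fun_prop
  -- small parameters
  have hS : 0 < 1 + ∑ j, R j := by
    have := Finset.sum_nonneg fun j (_ : j ∈ Finset.univ) => (hR j).le
    linarith
  have hsmall : ∀ w ∈ ball (0 : ℂ) (ε / (1 + ∑ j, R j)), G w = H w := by
    intro w hw
    have hw' : ‖w‖ < ε / (1 + ∑ j, R j) := by simpa using hw
    have hlt : ∀ i, ‖w‖ * R i < ε := by
      intro i
      have h1 : R i ≤ 1 + ∑ j, R j := by
        have := Finset.single_le_sum (fun j (_ : j ∈ Finset.univ) => (hR j).le) (Finset.mem_univ i)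
        linarith
      calc ‖w‖ * R i ≤ ‖w‖ * (1 + ∑ j, R j) := by gcongr
        _ < ε := by rwa [lt_div_iff₀ hS] at hw'
    have hnorm : ∀ β θ, ‖c β * ∏ j, (w • torusMap 0 R θ) j ^ β j‖ =
        ‖c β‖ * ∏ j, (‖w‖ * R j) ^ β j := by
      intro β θ
      simp only [norm_mul, norm_prod, norm_pow, Pi.smul_apply, smul_eq_mul, norm_torusMap_aux R hR]
    have hlim : ∀ θ, HasSum (fun β : Fin n → ℕ => c β * ∏ j, (w • torusMap 0 R θ) j ^ β j)
        (F (w • torusMap 0 R θ)) := by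
      intro θ
      refine hc _ fun i => ?_
      simp only [Pi.smul_apply, smul_eq_mul, norm_mul, norm_torusMap_aux R hR]
      exact hlt i
    have hsum : Summable fun β : Fin n → ℕ => ‖c β‖ * ∏ j, (‖w‖ * R j) ^ β j := by
      have := (hlim 0).summable.norm
      simpa only [hnorm] using this
    have key := hasSum_integral_of_dominated_convergence (μ := cubeMeas n)
      (F := fun (β : Fin n → ℕ) θ => (c β * ∏ j, (w • torusMap 0 R θ) j ^ β j) *
        (∏ j, torusMap 0 R θ j ^ α j)⁻¹) (f := f w)
      (fun β _ => (‖c β‖ * ∏ j, (‖w‖ * R j) ^ β j) * B)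
      (fun β => Continuous.aestronglyMeasurable (by
        refine Continuous.mul ?_ hBc
        simp only [Pi.smul_apply]
        fun_prop))
      (fun β => ae_of_all _ fun θ => by rw [norm_mul, hnorm, hBn])
      (ae_of_all _ fun θ => hsum.mul_right B) (integrable_const _)
      (ae_of_all _ fun θ => (hlim θ).mul_right _)
    have hterm : ∀ β : Fin n → ℕ, ∫ θ, (c β * ∏ j, (w • torusMap 0 R θ) j ^ β j) *
        (∏ j, torusMap 0 R θ j ^ α j)⁻¹ ∂(cubeMeas n) =
        c β * w ^ (∑ j, β j) * if β = α then (2 * (Real.pi : ℂ)) ^ n else 0 := by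
      intro β
      rw [← integral_monomial_aux R hR α β, ← integral_const_mul]
      refine integral_congr_ae (ae_of_all _ fun θ => ?_)
      simp only [Pi.smul_apply, smul_eq_mul, mul_pow, Finset.prod_mul_distrib,
        Finset.prod_pow_eq_pow_sum]
      ring
    simp_rw [hterm] at key
    have h2 := hasSum_single (f := fun β : Fin n → ℕ =>
      c β * w ^ (∑ j, β j) * if β = α then (2 * (Real.pi : ℂ)) ^ n else 0) α
      (fun β hβ => by simp [hβ])
    rw [hG, hH]
    simp only
    rw [key.unique h2]
    simp only [if_true]
    ring
  have hEq : Set.EqOn G H (ball 0 1) := by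
    refine AnalyticOnNhd.eqOn_of_preconnected_of_eventuallyEq (z₀ := 0)
      (hGd.analyticOnNhd isOpen_ball) (hHd.differentiableOn.analyticOnNhd isOpen_ball)
      (convex_ball _ _).isPreconnected (mem_ball_self one_pos) ?_
    filter_upwards [ball_mem_nhds (0 : ℂ) (div_pos hε hS)] with w hw using hsmall w hw
  have hEq2 : Set.EqOn G H (closedBall 0 1) :=
    hEq.of_subset_closure hGc hHd.continuous.continuousOn ball_subset_closedBall
      (by rw [closure_ball _ one_ne_zero])
  have := hEq2 (show (1 : ℂ) ∈ closedBall (0 : ℂ) 1 by simp)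
  simpa [hG, hH, hf] using this

/-- if `F` is holomorphic on a neighborhood of the closed polydisc of radii
`e^{ρᵢ}` with Taylor coefficients `c_α` at `0`, `q⁽¹⁾,…,q⁽ᵖ⁾ ∈ ℕⁿ`, and
`|tᵢ| < e^{⟨q⁽ⁱ⁾,ρ⟩}`, then the diagonal series
`d_q(t) = ∑_{l ∈ ℕᵖ} c_{l₁q⁽¹⁾+…+l_p q⁽ᵖ⁾} t₁^{l₁} ⋯ t_p^{l_p}` converges absolutely and
equals `(1/(2πi)ⁿ) ∫_{Γ_ρ} F(z) ∏ᵢ [z^{q⁽ⁱ⁾}/(z^{q⁽ⁱ⁾} − tᵢ)] dz₁/z₁ ∧ … ∧ dzₙ/zₙ`. -/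
theorem diagonal_integral_representation (n p : ℕ) (ρ : Fin n → ℝ)
    (F : (Fin n → ℂ) → ℂ)
    (hF : ∃ U : Set (Fin n → ℂ), IsOpen U ∧
      {z : Fin n → ℂ | ∀ i, ‖z i‖ ≤ Real.exp (ρ i)} ⊆ U ∧ DifferentiableOn ℂ F U)
    (c : (Fin n → ℕ) → ℂ)
    (hc : ∃ ε > (0 : ℝ), ∀ z : Fin n → ℂ, (∀ i, ‖z i‖ < ε) →
      HasSum (fun α : Fin n → ℕ => c α * ∏ i, z i ^ α i) (F z))
    (q : Fin p → Fin n → ℕ) (t : Fin p → ℂ)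
    (ht : ∀ i, ‖t i‖ < Real.exp (∑ j, (q i j : ℝ) * ρ j)) :
    Summable (fun l : Fin p → ℕ =>
      ‖c (fun j => ∑ i, l i * q i j) * ∏ i, t i ^ l i‖) ∧
    HasSum (fun l : Fin p → ℕ => c (fun j => ∑ i, l i * q i j) * ∏ i, t i ^ l i)
      (normTorusIntegral (fun i => Real.exp (ρ i))
        (fun z => F z *
          (∏ i, (∏ j, z j ^ (q i j : ℤ)) / ((∏ j, z j ^ (q i j : ℤ)) - t i)) / ∏ j, z j)) := by
  obtain ⟨U, hU, hKU, hFU⟩ := hF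
  obtain ⟨ε, hε, hc⟩ := hc
  set R : Fin n → ℝ := fun i => Real.exp (ρ i) with hRdef
  have hR : ∀ i, 0 < R i := fun i => Real.exp_pos _
  have hK : IsCompact {z : Fin n → ℂ | ∀ i, ‖z i‖ ≤ R i} := by
    have : {z : Fin n → ℂ | ∀ i, ‖z i‖ ≤ R i} = Set.univ.pi fun i => closedBall (0 : ℂ) (R i) := by
      ext z; simp
    rw [this]
    exact isCompact_univ_pi fun i => isCompact_closedBall _ _
  obtain ⟨M, hM⟩ := hK.exists_bound_of_continuousOn (hFU.continuousOn.mono hKU)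
  have hcoef := coeff_aux R hR F U hU hKU hFU M hM c ε hε hc
  have hTc := continuous_torusMap_aux R
  have hTK : ∀ θ i, ‖torusMap 0 R θ i‖ ≤ R i := fun θ i => (norm_torusMap_aux R hR θ i).le
  -- the monomials
  set m : Fin p → (Fin n → ℝ) → ℂ := fun i θ => ∏ j, torusMap 0 R θ j ^ q i j with hm
  have hm0 : ∀ i θ, m i θ ≠ 0 := fun i θ =>
    Finset.prod_ne_zero_iff.2 fun j _ => pow_ne_zero _ (torusMap_ne_zero_aux R hR θ j)
  have hmn : ∀ i θ, ‖m i θ‖ = Real.exp (∑ j, (q i j : ℝ) * ρ j) := by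
    intro i θ
    simp only [hm, norm_prod, norm_pow, norm_torusMap_aux R hR, Real.exp_sum, Real.exp_nat_mul]
    rfl
  set r : Fin p → ℝ := fun i => ‖t i‖ / Real.exp (∑ j, (q i j : ℝ) * ρ j) with hr
  have hr0 : ∀ i, 0 ≤ r i := fun i => by positivity
  have hr1 : ∀ i, r i < 1 := fun i => (div_lt_one (Real.exp_pos _)).2 (ht i)
  have hquot : ∀ i θ, ‖t i / m i θ‖ = r i := fun i θ => by rw [norm_div, hmn]
  have hgeom : ∀ θ, HasSum (fun l : Fin p → ℕ => ∏ i, (t i / m i θ) ^ l i)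
      (∏ i, m i θ / (m i θ - t i)) := by
    intro θ
    refine hasSum_pi_prod_aux p (fun i k => (t i / m i θ) ^ k) _ fun i => ?_
    have h1 : ‖t i / m i θ‖ < 1 := by rw [hquot]; exact hr1 i
    have h2 := hasSum_geometric_of_norm_lt_one h1
    convert h2 using 1
    rw [one_sub_div (hm0 i θ), inv_div]
  have hrsum : Summable fun l : Fin p → ℕ => ∏ i, r i ^ l i :=
    (hasSum_pi_prod_aux p (fun i k => r i ^ k) _
      fun i => hasSum_geometric_of_lt_one (hr0 i) (hr1 i)).summable
  have hFc : Continuous fun θ => F (torusMap 0 R θ) :=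
    hFU.continuousOn.comp_continuous hTc fun θ => hKU (hTK θ)
  have hmc : ∀ i, Continuous (m i) := fun i => by rw [hm]; fun_prop
  have key := hasSum_integral_of_dominated_convergence (μ := cubeMeas n)
    (F := fun (l : Fin p → ℕ) θ => F (torusMap 0 R θ) * ∏ i, (t i / m i θ) ^ l i)
    (f := fun θ => F (torusMap 0 R θ) * ∏ i, m i θ / (m i θ - t i))
    (fun l _ => M * ∏ i, r i ^ l i)
    (fun l => Continuous.aestronglyMeasurable (hFc.mul (continuous_finsetProd _ fun i _ =>
      (continuous_const.div (hmc i) (hm0 i)).pow _)))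
    (fun l => ae_of_all _ fun θ => by
      simp only [norm_mul, norm_prod, norm_pow, hquot]
      exact mul_le_mul_of_nonneg_right (hM _ (hTK θ))
        (Finset.prod_nonneg fun i _ => pow_nonneg (hr0 i) _))
    (ae_of_all _ fun θ => hrsum.mul_left M) (integrable_const _)
    (ae_of_all _ fun θ => (hgeom θ).mul_left _)
  have hpi : (2 * (Real.pi : ℂ)) ^ n ≠ 0 :=
    pow_ne_zero _ (mul_ne_zero two_ne_zero (Complex.ofReal_ne_zero.2 Real.pi_ne_zero))
  have hterm : ∀ l : Fin p → ℕ, ∫ θ, F (torusMap 0 R θ) * ∏ i, (t i / m i θ) ^ l i ∂(cubeMeas n) =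
      (2 * (Real.pi : ℂ)) ^ n * (c (fun j => ∑ i, l i * q i j) * ∏ i, t i ^ l i) := by
    intro l
    rw [← mul_assoc, ← hcoef, ← integral_mul_const]
    refine integral_congr_ae (ae_of_all _ fun θ => ?_)
    have : ∏ j, torusMap 0 R θ j ^ (∑ i, l i * q i j) = ∏ i, m i θ ^ l i := by
      simp only [hm, ← Finset.prod_pow_eq_pow_sum, ← Finset.prod_pow]
      rw [Finset.prod_comm]
      refine Finset.prod_congr rfl fun i _ => Finset.prod_congr rfl fun j _ => ?_
      rw [← pow_mul, mul_comm]
    simp only [this, div_pow, Finset.prod_div_distrib]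
    ring
  simp_rw [hterm] at key
  have hfin := key.mul_left ((2 * (Real.pi : ℂ)) ^ n)⁻¹
  simp only [inv_mul_cancel_left₀ hpi] at hfin
  have hmain : HasSum (fun l : Fin p → ℕ => c (fun j => ∑ i, l i * q i j) * ∏ i, t i ^ l i)
      (normTorusIntegral R
        (fun z => F z *
          (∏ i, (∏ j, z j ^ (q i j : ℤ)) / ((∏ j, z j ^ (q i j : ℤ)) - t i)) / ∏ j, z j)) := by
    rw [normTorusIntegral_aux R hR (fun z => F z *
          (∏ i, (∏ j, z j ^ (q i j : ℤ)) / ((∏ j, z j ^ (q i j : ℤ)) - t i)))]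
    simpa only [zpow_natCast] using hfin
  exact ⟨hmain.summable.norm, hmain⟩
end
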